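/- Let f : V → [0,∞], let A : V → W be a bounded linear operator between separable real Hilbert spaces, let d ∈ W and γ > 0, and define 𝒥(x) = f(x) + ½‖Ax−d‖²_W and 𝒥_γ(x) = S_γ²(f)(x) + ½‖Ax−d‖²_W. Then: (i) if ⟨A*Ax,x⟩ ≥ γ‖x‖² for all x ∈ V, then 𝒥_γ is convex and 𝒥_γ ≤ CE(𝒥) pointwise, where CE(𝒥) is the lower semicontinuous convex envelope of 𝒥; (ii) if there is ε > 0 with ⟨A*Ax,x⟩ ≥ (γ+ε)‖x‖² for all x ∈ V (and f is proper), then 𝒥_γ is strongly convex and has a unique global minimizer; (iii) any global minimizer x̂ of 𝒥_γ satisfying f(x̂) = S_γ²(f)(x̂) is a global minimizer of 𝒥. -/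

import Mathlib

open scoped InnerProductSpace RealInnerProductSpace ENNReal Topology
open Filter

noncomputable section

/-- The S-transform `S_γ(f)(y) = sup_x ( -f(x) - (γ/2)‖x-y‖² )` for
extended-real-valued functions on a real inner product space. -/
def SgammaE {V : Type*} [NormedAddCommGroup V] [InnerProductSpace ℝ V]
    (γ : ℝ) (f : V → EReal) (y : V) : EReal :=
  ⨆ x : V, (-(f x) - (((γ / 2) * ‖x - y‖ ^ 2 : ℝ) : EReal))

/-- The S-transform of a `[0,∞]`-valued function. -/
def Sgamma {V : Type*} [NormedAddCommGroup V] [InnerProductSpace ℝ V]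
    (γ : ℝ) (f : V → ℝ≥0∞) (y : V) : EReal :=
  SgammaE γ (fun x => (f x : EReal)) y

/-- The twice iterated S-transform `S_γ²(f) = S_γ(S_γ(f))`. -/
def Sgamma2 {V : Type*} [NormedAddCommGroup V] [InnerProductSpace ℝ V]
    (γ : ℝ) (f : V → ℝ≥0∞) : V → EReal :=
  SgammaE γ (Sgamma γ f)

/-- Convexity for extended-real-valued functions. -/
def EConvexOn {V : Type*} [NormedAddCommGroup V] [InnerProductSpace ℝ V]
    (h : V → EReal) : Prop :=
  ∀ x y : V, ∀ a b : ℝ, 0 ≤ a → 0 ≤ b → a + b = 1 →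
    h (a • x + b • y) ≤ (a : EReal) * h x + (b : EReal) * h y

/-- The lower semicontinuous convex envelope of `g`: the (pointwise) supremum of all l.s.c.
convex functions below `g`, which is the largest such function. -/
def lscConvexEnvelope {V : Type*} [NormedAddCommGroup V] [InnerProductSpace ℝ V]
    (g : V → EReal) (x : V) : EReal :=
  ⨆ h : {h : V → EReal // LowerSemicontinuous h ∧ EConvexOn h ∧ ∀ x, h x ≤ g x}, h.1 x

lemma EReal.iSup_add_coe {ι : Sort*} (g : ι → EReal) (r : ℝ) :
    (⨆ i, g i) + (r : EReal) = ⨆ i, (g i + (r : EReal)) := by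
  refine le_antisymm ?_ (iSup_le fun i => by gcongr; exact le_iSup g i)
  rw [← EReal.le_sub_iff_add_le (Or.inl (EReal.coe_ne_bot r)) (Or.inl (EReal.coe_ne_top r))]
  refine iSup_le fun i => ?_
  rw [EReal.le_sub_iff_add_le (Or.inl (EReal.coe_ne_bot r)) (Or.inl (EReal.coe_ne_top r))]
  exact le_iSup (fun i => g i + (r : EReal)) i

section Envelope

variable {V : Type*} [NormedAddCommGroup V] [InnerProductSpace ℝ V]

/-- A supremum of extended-real translates of finite convex functions is convex. -/
lemma EConvexOn.iSup_const_add {ι : Type*} {c : ι → EReal} {q : ι → V → ℝ}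
    (hc : ∀ i, c i ≠ ⊥) (hq : ∀ i, ConvexOn ℝ Set.univ (q i)) :
    EConvexOn (fun x => ⨆ i, (c i + (q i x : EReal))) := by
  intro x y a b ha hb hab
  refine iSup_le fun i => ?_
  have hle : ∀ z, c i + (q i z : EReal) ≤ ⨆ j, (c j + (q j z : EReal)) :=
    fun z => le_iSup (fun j => c j + (q j z : EReal)) i
  have ha' : (0 : EReal) ≤ (a : EReal) := EReal.coe_nonneg.2 ha
  have hb' : (0 : EReal) ≤ (b : EReal) := EReal.coe_nonneg.2 hb
  refine le_trans ?_ (add_le_add (mul_le_mul_of_nonneg_left (hle x) ha')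
    (mul_le_mul_of_nonneg_left (hle y) hb'))
  have hci := hc i
  induction hr : c i using EReal.rec with
  | bot => exact absurd hr hci
  | top =>
    simp only [EReal.top_add_coe]
    rcases ha.eq_or_lt with rfl | ha
    · obtain rfl : b = 1 := by linarith
      simp
    · rw [EReal.coe_mul_top_of_pos ha]
      rcases hb.eq_or_lt with rfl | hb
      · simp
      · rw [EReal.coe_mul_top_of_pos hb]; simp
  | coe r =>
    have h := (hq i).2 (Set.mem_univ x) (Set.mem_univ y) ha hb hab
    simp only [smul_eq_mul] at h
    norm_cast
    have hr' : r = a * r + b * r := by rw [← add_mul, hab, one_mul]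
    linarith

/-- A supremum of extended-real translates of finite continuous functions is lower
semicontinuous. -/
lemma lowerSemicontinuous_iSup_const_add {ι X : Type*} [TopologicalSpace X] {c : ι → EReal}
    {q : ι → X → ℝ} (hq : ∀ i, Continuous (q i)) :
    LowerSemicontinuous (fun x => ⨆ i, (c i + (q i x : EReal))) := by
  refine lowerSemicontinuous_iSup fun i => Continuous.lowerSemicontinuous ?_
  induction c i using EReal.rec with
  | bot => simpa using continuous_const
  | top => simpa using continuous_const
  | coe r =>
    simp only [← EReal.coe_add]
    exact continuous_coe_real_ereal.comp (continuous_const.add (hq i))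

lemma norm_sq_convexCombination (x y : V) {a b : ℝ} (hab : a + b = 1) :
    ‖a • x + b • y‖ ^ 2 = a * ‖x‖ ^ 2 + b * ‖y‖ ^ 2 - a * b * ‖x - y‖ ^ 2 := by
  obtain rfl : b = 1 - a := by linarith
  rw [norm_add_sq_real, norm_sub_sq_real, norm_smul, norm_smul, mul_pow, mul_pow,
    real_inner_smul_left, real_inner_smul_right, Real.norm_eq_abs, Real.norm_eq_abs, sq_abs, sq_abs]
  ring

lemma Sgamma_nonpos (γ : ℝ) (hγ : 0 ≤ γ) (f : V → ℝ≥0∞) (y : V) : Sgamma γ f y ≤ 0 := by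
  refine iSup_le fun x => ?_
  rw [sub_eq_add_neg, ← EReal.coe_neg]
  refine add_nonpos ?_ ?_
  · rw [EReal.neg_le, neg_zero]; exact EReal.coe_ennreal_nonneg _
  · exact_mod_cast neg_nonpos.2 (by positivity)

lemma Sgamma2_nonneg (γ : ℝ) (hγ : 0 ≤ γ) (f : V → ℝ≥0∞) (x : V) : 0 ≤ Sgamma2 γ f x := by
  refine le_trans ?_ (le_iSup (fun y => -(Sgamma γ f y) - (((γ / 2) * ‖y - x‖ ^ 2 : ℝ) : EReal)) x)
  simpa using EReal.neg_le_neg_iff.2 (Sgamma_nonpos γ hγ f x)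

lemma Sgamma2_le (γ : ℝ) (f : V → ℝ≥0∞) (x : V) : Sgamma2 γ f x ≤ (f x : EReal) := by
  refine iSup_le fun y => ?_
  rw [EReal.sub_le_iff_le_add (Or.inl (EReal.coe_ne_bot _)) (Or.inl (EReal.coe_ne_top _)),
    EReal.neg_le]
  have h := le_iSup (fun z => -(f z : EReal) - (((γ / 2) * ‖z - y‖ ^ 2 : ℝ) : EReal)) x
  rw [norm_sub_rev y x, EReal.neg_add (Or.inr (EReal.coe_ne_top _)) (Or.inr (EReal.coe_ne_bot _))]
  exact h

lemma Sgamma2_add_coe (γ : ℝ) (f : V → ℝ≥0∞) (x : V) (r : ℝ) :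
    Sgamma2 γ f x + (r : EReal) =
      ⨆ y, (-(Sgamma γ f y) + ((r - γ / 2 * ‖y - x‖ ^ 2 : ℝ) : EReal)) := by
  rw [Sgamma2, SgammaE, EReal.iSup_add_coe]
  refine iSup_congr fun y => ?_
  rw [sub_eq_add_neg, ← EReal.coe_neg, add_assoc, ← EReal.coe_add]
  congr 2
  ring

variable {W : Type*} [NormedAddCommGroup W] [InnerProductSpace ℝ W]

lemma convexOn_quadratic {A : V →L[ℝ] W} {d : W} {γ β : ℝ}
    (hA : ∀ x, (γ + β) * ‖x‖ ^ 2 ≤ ‖A x‖ ^ 2) (y : V) :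
    ConvexOn ℝ Set.univ (fun x =>
      1 / 2 * ‖A x - d‖ ^ 2 - β / 2 * ‖x‖ ^ 2 - γ / 2 * ‖y - x‖ ^ 2) := by
  refine ⟨convex_univ, fun x _ z _ a b ha hb hab => ?_⟩
  have hd : A (a • x + b • z) - d = a • (A x - d) + b • (A z - d) := by
    obtain rfl : b = 1 - a := by linarith
    simp only [map_add, map_smul]
    module
  have hy : y - (a • x + b • z) = a • (y - x) + b • (y - z) := by
    obtain rfl : b = 1 - a := by linarith
    module
  simp only [smul_eq_mul]
  rw [hd, hy, norm_sq_convexCombination _ _ hab, norm_sq_convexCombination _ _ hab,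
    norm_sq_convexCombination _ _ hab, sub_sub_sub_cancel_right, sub_sub_sub_cancel_left,
    ← map_sub, norm_sub_rev z x]
  nlinarith [mul_le_mul_of_nonneg_left (hA (x - z)) (mul_nonneg ha hb)]

lemma Sgamma2_add_quadratic_eConvexOn {A : V →L[ℝ] W} {d : W} {γ β : ℝ} (hγ : 0 ≤ γ)
    (f : V → ℝ≥0∞) (hA : ∀ x, (γ + β) * ‖x‖ ^ 2 ≤ ‖A x‖ ^ 2) :
    EConvexOn (fun x => Sgamma2 γ f x +
      ((1 / 2 * ‖A x - d‖ ^ 2 - β / 2 * ‖x‖ ^ 2 : ℝ) : EReal)) := by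
  simp only [Sgamma2_add_coe]
  refine EConvexOn.iSup_const_add (fun y h => ?_) (fun y => convexOn_quadratic hA y)
  rw [EReal.neg_eq_bot_iff] at h
  have := Sgamma_nonpos γ hγ f y
  rw [h] at this
  exact absurd this (by simp)

lemma Sgamma2_add_quadratic_lowerSemicontinuous (A : V →L[ℝ] W) (d : W) (γ : ℝ)
    (f : V → ℝ≥0∞) :
    LowerSemicontinuous (fun x => Sgamma2 γ f x + ((1 / 2 * ‖A x - d‖ ^ 2 : ℝ) : EReal)) := by
  simp only [Sgamma2_add_coe]
  exact lowerSemicontinuous_iSup_const_add fun y => by fun_prop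

/-- Quantitative midpoint convexity of a strongly convex function on its sublevel sets. -/
lemma EConvexOn.midpoint_le_of_sub_sq {F : V → EReal} {β : ℝ}
    (hF : EConvexOn (fun x => F x - ((β / 2 * ‖x‖ ^ 2 : ℝ) : EReal)))
    {x y : V} {s t : ℝ} (hx : F x ≤ s) (hy : F y ≤ t) :
    F ((1 / 2 : ℝ) • x + (1 / 2 : ℝ) • y) ≤ ((s + t) / 2 - β / 8 * ‖x - y‖ ^ 2 : ℝ) := by
  have half : (0 : EReal) ≤ ((1 / 2 : ℝ) : EReal) := EReal.coe_nonneg.2 (by norm_num)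
  have h := hF x y (1 / 2) (1 / 2) (by norm_num) (by norm_num) (by norm_num)
  have h2 := h.trans (add_le_add
    (mul_le_mul_of_nonneg_left (EReal.sub_le_sub hx le_rfl) half)
    (mul_le_mul_of_nonneg_left (EReal.sub_le_sub hy le_rfl) half))
  rw [EReal.sub_le_iff_le_add (Or.inl (EReal.coe_ne_bot _)) (Or.inl (EReal.coe_ne_top _))] at h2
  refine h2.trans (le_of_eq ?_)
  rw [norm_sq_convexCombination x y (by norm_num : (1 / 2 : ℝ) + 1 / 2 = 1)]
  norm_cast
  ring

/-- A nonnegative, proper, lower semicontinuous, strongly convex function on a complete space has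
a unique minimizer. -/
lemma existsUnique_minimizer_of_strongly_convex [CompleteSpace V] {F : V → EReal} {β : ℝ}
    (hβ : 0 < β) (hlsc : LowerSemicontinuous F) (h0 : ∀ x, 0 ≤ F x) (hproper : ∃ x, F x ≠ ⊤)
    (hF : EConvexOn (fun x => F x - ((β / 2 * ‖x‖ ^ 2 : ℝ) : EReal))) :
    ∃! x, ∀ y, F x ≤ F y := by
  obtain ⟨x₀, hx₀⟩ := hproper
  obtain ⟨m, hm⟩ : ∃ m : ℝ, (m : EReal) = ⨅ x, F x :=
    ⟨_, EReal.coe_toReal (ne_top_of_le_ne_top hx₀ (iInf_le F x₀))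
      (ne_bot_of_le_ne_bot EReal.zero_ne_bot (le_iInf h0))⟩
  have hmF : ∀ x, (m : EReal) ≤ F x := fun x => hm.trans_le (iInf_le F x)
  have hdist : ∀ {x y : V} {δ : ℝ}, F x ≤ ((m + δ : ℝ) : EReal) → F y ≤ ((m + δ : ℝ) : EReal) →
      dist x y ≤ √(8 / β * δ) := by
    intro x y δ hx hy
    have h := (hmF _).trans (hF.midpoint_le_of_sub_sq hx hy)
    rw [EReal.coe_le_coe_iff] at h
    rw [dist_eq_norm]
    apply Real.le_sqrt_of_sq_le
    rw [div_mul_eq_mul_div, le_div_iff₀ hβ]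
    linarith
  have hmin : ∀ x, (∀ y, F x ≤ F y) → F x = m := fun x hx =>
    le_antisymm (hm.symm ▸ le_iInf hx) (hmF x)
  have hseq : ∀ n : ℕ, ∃ x, F x ≤ ((m + 1 / ((n : ℝ) + 1) : ℝ) : EReal) := by
    intro n
    have : ⨅ x, F x < ((m + 1 / ((n : ℝ) + 1) : ℝ) : EReal) := by
      rw [← hm, EReal.coe_lt_coe_iff]
      exact lt_add_of_pos_right _ Nat.one_div_pos_of_nat
    obtain ⟨x, hx⟩ := iInf_lt_iff.1 this
    exact ⟨x, hx.le⟩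
  choose u hu using hseq
  have hmono : ∀ {N n : ℕ}, N ≤ n → F (u n) ≤ ((m + 1 / ((N : ℝ) + 1) : ℝ) : EReal) :=
    fun hn => (hu _).trans
      (EReal.coe_le_coe_iff.2 (add_le_add le_rfl (Nat.one_div_le_one_div hn)))
  have hcauchy : CauchySeq u := by
    refine cauchySeq_of_le_tendsto_0 (fun N : ℕ => √(8 / β * (1 / ((N : ℝ) + 1))))
      (fun n k N hn hk => hdist (hmono hn) (hmono hk)) ?_
    have h := (tendsto_one_div_add_atTop_nhds_zero_nat (𝕜 := ℝ)).const_mul (8 / β)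
    simpa using h.sqrt
  obtain ⟨x, hx⟩ := cauchySeq_tendsto_of_complete hcauchy
  have hxN : ∀ N : ℕ, F x ≤ ((m + 1 / ((N : ℝ) + 1) : ℝ) : EReal) := fun N =>
    (hlsc.isClosed_preimage _).mem_of_tendsto hx
      ((eventually_ge_atTop N).mono fun n hn => hmono hn)
  have hxm : F x ≤ m := by
    refine ge_of_tendsto' (x := atTop) ((continuous_coe_real_ereal.tendsto m).comp ?_) hxN
    simpa using (tendsto_one_div_add_atTop_nhds_zero_nat (𝕜 := ℝ)).const_add m
  refine ⟨x, fun y => hxm.trans (hmF y), fun z hz => ?_⟩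
  have h := hdist (δ := 0) (by simpa using (hmin z hz).le) (by simpa using hxm)
  simpa using h

end Envelope

/-- case `A*A ≥ γI`. With `𝒥(x) = f(x) + ½‖Ax-d‖²` and
`𝒥_γ(x) = S_γ²(f)(x) + ½‖Ax-d‖²`: (i) if `⟨A*Ax,x⟩ ≥ γ‖x‖²` then `𝒥_γ` is convex and
`𝒥_γ ≤ CE(𝒥)`; (ii) if `⟨A*Ax,x⟩ ≥ (γ+ε)‖x‖²` for some `ε > 0` and `f` is proper, then `𝒥_γ`
is strongly convex and has a unique global minimizer; (iii) any global minimizer `x̂` of `𝒥_γ`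
with `f(x̂) = S_γ²(f)(x̂)` is a global minimizer of `𝒥`. -/
theorem statement15 {V W : Type*}
    [NormedAddCommGroup V] [InnerProductSpace ℝ V] [CompleteSpace V]
    [TopologicalSpace.SeparableSpace V]
    [NormedAddCommGroup W] [InnerProductSpace ℝ W] [CompleteSpace W]
    [TopologicalSpace.SeparableSpace W]
    (f : V → ℝ≥0∞) (A : V →L[ℝ] W) (d : W) (γ : ℝ) (hγ : 0 < γ) :
    ((∀ x : V, γ * ‖x‖ ^ 2 ≤ ⟪(ContinuousLinearMap.adjoint A) (A x), x⟫_ℝ) →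
      EConvexOn (fun x => Sgamma2 γ f x + ((1 / 2 * ‖A x - d‖ ^ 2 : ℝ) : EReal)) ∧
      (∀ x : V, Sgamma2 γ f x + ((1 / 2 * ‖A x - d‖ ^ 2 : ℝ) : EReal) ≤
        lscConvexEnvelope (fun z => (f z : EReal) + ((1 / 2 * ‖A z - d‖ ^ 2 : ℝ) : EReal)) x)) ∧
    ((∃ ε : ℝ, 0 < ε ∧
        ∀ x : V, (γ + ε) * ‖x‖ ^ 2 ≤ ⟪(ContinuousLinearMap.adjoint A) (A x), x⟫_ℝ) →
      (∃ x, f x ≠ ∞) →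
      (∃ β : ℝ, 0 < β ∧ EConvexOn (fun x =>
          (Sgamma2 γ f x + ((1 / 2 * ‖A x - d‖ ^ 2 : ℝ) : EReal)) -
            ((β / 2 * ‖x‖ ^ 2 : ℝ) : EReal))) ∧
      (∃! xhat : V, ∀ y : V,
          Sgamma2 γ f xhat + ((1 / 2 * ‖A xhat - d‖ ^ 2 : ℝ) : EReal) ≤
            Sgamma2 γ f y + ((1 / 2 * ‖A y - d‖ ^ 2 : ℝ) : EReal))) ∧
    (∀ xhat : V,
      (∀ y : V, Sgamma2 γ f xhat + ((1 / 2 * ‖A xhat - d‖ ^ 2 : ℝ) : EReal) ≤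
          Sgamma2 γ f y + ((1 / 2 * ‖A y - d‖ ^ 2 : ℝ) : EReal)) →
      (f xhat : EReal) = Sgamma2 γ f xhat →
      ∀ y : V, (f xhat : EReal) + ((1 / 2 * ‖A xhat - d‖ ^ 2 : ℝ) : EReal) ≤
          (f y : EReal) + ((1 / 2 * ‖A y - d‖ ^ 2 : ℝ) : EReal)) := by
  have hadj : ∀ x, ⟪(ContinuousLinearMap.adjoint A) (A x), x⟫_ℝ = ‖A x‖ ^ 2 := fun x => by
    rw [ContinuousLinearMap.adjoint_inner_left, real_inner_self_eq_norm_sq]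
  have hle : ∀ x, Sgamma2 γ f x + ((1 / 2 * ‖A x - d‖ ^ 2 : ℝ) : EReal) ≤
      (f x : EReal) + ((1 / 2 * ‖A x - d‖ ^ 2 : ℝ) : EReal) :=
    fun x => add_le_add (Sgamma2_le γ f x) le_rfl
  have hlsc := Sgamma2_add_quadratic_lowerSemicontinuous A d γ f
  simp only [hadj]
  refine ⟨fun hA => ?_, ?_, ?_⟩
  · have hconv : EConvexOn
        (fun x => Sgamma2 γ f x + ((1 / 2 * ‖A x - d‖ ^ 2 : ℝ) : EReal)) := by
      simpa using Sgamma2_add_quadratic_eConvexOn (d := d) (β := 0) hγ.le f (by simpa using hA)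
    refine ⟨hconv, fun x => ?_⟩
    exact le_iSup (fun h : {h : V → EReal // LowerSemicontinuous h ∧ EConvexOn h ∧
      ∀ x, h x ≤ (f x : EReal) + ((1 / 2 * ‖A x - d‖ ^ 2 : ℝ) : EReal)} => h.1 x)
      ⟨_, hlsc, hconv, hle⟩
  · rintro ⟨ε, hε, hA⟩ ⟨x₀, hx₀⟩
    have hconv : EConvexOn (fun x =>
        (Sgamma2 γ f x + ((1 / 2 * ‖A x - d‖ ^ 2 : ℝ) : EReal)) -
          ((ε / 2 * ‖x‖ ^ 2 : ℝ) : EReal)) := by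
      simpa only [sub_eq_add_neg, add_assoc, EReal.coe_add, EReal.coe_neg] using
        Sgamma2_add_quadratic_eConvexOn (d := d) hγ.le f hA
    refine ⟨⟨ε, hε, hconv⟩, existsUnique_minimizer_of_strongly_convex hε hlsc
      (fun x => add_nonneg (Sgamma2_nonneg γ hγ.le f x) (EReal.coe_nonneg.2 (by positivity)))
      ⟨x₀, ne_top_of_le_ne_top ?_ (hle x₀)⟩ hconv⟩
    exact EReal.add_ne_top (by simpa using hx₀) (EReal.coe_ne_top _)
  · intro xhat hmin heq y
    rw [heq]
    exact (hmin y).trans (hle y)
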